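/- arXiv:2202.01551 — 2 statements merged into one kernel-verified Lean document; each statement's English description precedes it below -/
import Mathlib

section
/- Assume that either H_i ≠ {0} for all i ∈ Ω or P is hierarchical. Then for every φ ∈ G there exists a unique λ ∈ Aut(P) such that λ restricted to Ω − K is the identity and ⟨supp(φ(α))⟩_P = λ[⟨supp(α)⟩_P] for all α ∈ H; moreover, such λ necessarily belongs to T. -/
def idl {Ω : Type*} [PartialOrder Ω] (B : Set Ω) : Set Ω := {a | ∃ b ∈ B, a ≤ b}

def IsIdl {Ω : Type*} [PartialOrder Ω] (I : Set Ω) : Prop := ∀ a b : Ω, a ≤ b → b ∈ I → a ∈ I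

noncomputable def lenP {Ω : Type*} [PartialOrder Ω] (y : Ω) : ℕ :=
  sSup {n : ℕ | ∃ c : Finset Ω, IsChain (· ≤ ·) (c : Set Ω) ∧ y ∈ c ∧ (∀ x ∈ c, x ≤ y) ∧ c.card = n}

def Hierarchical (Ω : Type*) [PartialOrder Ω] : Prop :=
  ∀ u v : Ω, lenP u + 1 ≤ lenP v → u ≤ v

def hsupp {Ω : Type*} {H : Ω → Type*} [∀ i, Zero (H i)] (β : ∀ i, H i) : Set Ω :=
  {i | β i ≠ 0}

/-- `K` is the set of indices with nonzero component module. -/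
def Kset {Ω : Type*} (H : Ω → Type*) [∀ i, Zero (H i)] : Set Ω := {i | ∃ x : H i, x ≠ 0}

/-- The subgroup `T` of order automorphisms of the poset. -/
def Tpred (S : Type*) [Ring S] {Ω : Type*} [PartialOrder Ω] (H : Ω → Type*)
    [∀ i, AddCommGroup (H i)] [∀ i, Module S (H i)] {Y : Type*} (ϖ : Set Ω → Y)
    (μ : Ω ≃o Ω) : Prop :=
  (∀ i ∉ Kset H, μ i = i) ∧ (∀ I : Set Ω, I ⊆ Kset H → ϖ (μ '' I) = ϖ I) ∧
    ∀ i : Ω, Nonempty (H i ≃ₗ[S] H (μ i))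

/-- The group `G` of `S`-module automorphisms of `H` preserving `ϖ ∘ supp`. -/
def Gpred (S : Type*) [Ring S] {Ω : Type*} (H : Ω → Type*)
    [∀ i, AddCommGroup (H i)] [∀ i, Module S (H i)] {Y : Type*} (ϖ : Set Ω → Y)
    (φ : (∀ i, H i) ≃ₗ[S] (∀ i, H i)) : Prop :=
  ∀ α : ∀ i, H i, ϖ (hsupp (φ α)) = ϖ (hsupp α)

/-!
The weight `ϖ` forces `φ` to send principal ideals to principal ideals. If `γ` is supported in
`↓u` with `γ u ≠ 0`, then expanding `φ γ` into its components and applying `φ⁻¹` produces an index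
`j` of the support of `φ γ` whose weight dominates that of `u`, and (3.3) gives
`⟨supp (φ γ)⟩ = ↓j`. Comparing `φ δ` with `φ (γ - δ)` shows moreover that `φ` maps *every* vector
supported in `↓u` to a vector supported in `↓j`, and `φ⁻¹` maps back. This two-sided
correspondence makes `u ↦ j` an order automorphism of `K`.
Extended by the identity it remains monotone when `P` is hierarchical: indices of equal weight are
never strictly comparable, hence have equal length, so lengths are preserved.
-/

open Set

section Ideals

variable {Ω : Type*} [PartialOrder Ω]

theorem isIdl_idl (B : Set Ω) : IsIdl (idl B) :=
  fun _ _ hab ⟨c, hc, hbc⟩ ↦ ⟨c, hc, hab.trans hbc⟩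

theorem IsIdl.idl_subset {B I : Set Ω} (hI : IsIdl I) (hB : B ⊆ I) : idl B ⊆ I :=
  fun a ⟨b, hb, hab⟩ ↦ hI a b hab (hB hb)

theorem subset_idl (B : Set Ω) : B ⊆ idl B :=
  fun b hb ↦ ⟨b, hb, le_rfl⟩

@[simp]
theorem idl_singleton (a : Ω) : idl {a} = Iic a := by
  ext
  simp [idl]

theorem mem_of_idl_eq_Iic {B : Set Ω} {a : Ω} (h : idl B = Iic a) : a ∈ B := by
  obtain ⟨b, hb, hab⟩ : a ∈ idl B := h ▸ self_mem_Iic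
  have hba : b ≤ a := h.subset (subset_idl B hb)
  rwa [hab.antisymm hba]

theorem idl_image (lam : Ω ≃o Ω) (B : Set Ω) : idl (lam '' B) = lam '' idl B := by
  ext x
  rw [lam.image_eq_preimage_symm (idl B)]
  simp [idl, lam.symm_apply_le]

end Ideals

section Length

variable {Ω : Type*} [Finite Ω] [PartialOrder Ω]

theorem bddAbove_card_chain (y : Ω) : BddAbove {n : ℕ | ∃ c : Finset Ω,
    IsChain (· ≤ ·) (c : Set Ω) ∧ y ∈ c ∧ (∀ x ∈ c, x ≤ y) ∧ c.card = n} := by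
  cases nonempty_fintype Ω
  refine ⟨Fintype.card Ω, ?_⟩
  rintro n ⟨c, -, -, -, rfl⟩
  exact c.card_le_univ

theorem card_le_lenP {y : Ω} {c : Finset Ω} (hc : IsChain (· ≤ ·) (c : Set Ω)) (hy : y ∈ c)
    (hle : ∀ x ∈ c, x ≤ y) : c.card ≤ lenP y :=
  le_csSup (bddAbove_card_chain y) ⟨c, hc, hy, hle, rfl⟩

theorem exists_chain_card_eq_lenP (y : Ω) : ∃ c : Finset Ω,
    IsChain (· ≤ ·) (c : Set Ω) ∧ y ∈ c ∧ (∀ x ∈ c, x ≤ y) ∧ c.card = lenP y := by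
  refine Nat.sSup_mem ?_ (bddAbove_card_chain y)
  exact ⟨1, {y}, by simp⟩

theorem lenP_strictMono : StrictMono (lenP : Ω → ℕ) := by
  classical
  intro a b hab
  obtain ⟨c, hc, -, hle, hcard⟩ := exists_chain_card_eq_lenP a
  have hb : b ∉ c := fun hb ↦ hab.not_ge (hle b hb)
  have hle' : ∀ x ∈ insert b c, x ≤ b :=
    Finset.forall_mem_insert _ _ _ |>.2 ⟨le_rfl, fun x hx ↦ (hle x hx).trans hab.le⟩
  have hchain : IsChain (· ≤ ·) (↑(insert b c) : Set Ω) := by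
    rw [Finset.coe_insert]
    exact hc.insert fun x hx _ ↦ .inr (hle' x (Finset.mem_insert_of_mem hx))
  calc lenP a < (insert b c).card := by rw [Finset.card_insert_of_notMem hb, hcard]; omega
    _ ≤ lenP b := card_le_lenP hchain (Finset.mem_insert_self b c) hle'

end Length

section Support

variable {Ω : Type*} {H : Ω → Type*}

theorem hsupp_single [DecidableEq Ω] [∀ i, Zero (H i)] {u : Ω} {x : H u} (hx : x ≠ 0) :
    hsupp (Pi.single u x : ∀ i, H i) = {u} := by
  ext i
  obtain rfl | hi := eq_or_ne i u <;> simp [hsupp, *]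

theorem hsupp_single_subset [DecidableEq Ω] [∀ i, Zero (H i)] (u : Ω) (x : H u) :
    hsupp (Pi.single u x : ∀ i, H i) ⊆ {u} := by
  intro i hi
  by_contra hne
  exact hi (Pi.single_eq_of_ne hne x)

theorem exists_hsupp_eq [∀ i, Zero (H i)] {I : Set Ω} (hI : I ⊆ Kset H) :
    ∃ β : ∀ i, H i, hsupp β = I := by
  classical
  choose x hx using fun i : I ↦ hI i.2
  refine ⟨fun i ↦ if hi : i ∈ I then x ⟨i, hi⟩ else 0, ?_⟩
  ext i
  by_cases hi : i ∈ I <;> simp [hsupp, hi, hx]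

theorem hsupp_sub_subset [∀ i, AddGroup (H i)] (β γ : ∀ i, H i) :
    hsupp (β - γ) ⊆ hsupp β ∪ hsupp γ := by
  intro i hi
  by_contra! h
  simp_all [hsupp]

theorem exists_mem_hsupp_map_single [Finite Ω] [DecidableEq Ω] [∀ i, AddCommMonoid (H i)]
    {Ω' : Type*} {H' : Ω' → Type*} [∀ i, AddCommMonoid (H' i)] {F : Type*}
    [FunLike F (∀ i, H i) (∀ i, H' i)] [AddMonoidHomClass F (∀ i, H i) (∀ i, H' i)]
    (f : F) {γ : ∀ i, H i} {u : Ω'} (hu : u ∈ hsupp (f γ)) :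
    ∃ j ∈ hsupp γ, u ∈ hsupp (f (Pi.single j (γ j))) := by
  cases nonempty_fintype Ω
  have hsum : ∑ j, f (Pi.single j (γ j)) u ≠ 0 := by
    rwa [← Finset.sum_apply, ← map_sum, Finset.univ_sum_single]
  obtain ⟨j, -, hj⟩ := Finset.exists_ne_zero_of_sum_ne_zero hsum
  refine ⟨j, fun hγ ↦ hj ?_, hj⟩
  rw [hγ, Pi.single_zero, map_zero, Pi.zero_apply]

end Support

section Induces

variable {Ω : Type*} [PartialOrder Ω] {S : Type*} [Semiring S] {H : Ω → Type*}
  [∀ i, AddCommGroup (H i)] [∀ i, Module S (H i)]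
  {φ : (∀ i, H i) ≃ₗ[S] (∀ i, H i)} {lam lam' : Ω ≃o Ω}

/-- The automorphism `φ` induces `lam` on the poset of indices: it acts through `lam` on the
ideals generated by supports. -/
def Induces (φ : (∀ i, H i) ≃ₗ[S] (∀ i, H i)) (lam : Ω ≃o Ω) : Prop :=
  ∀ α : ∀ i, H i, idl (hsupp (φ α)) = lam '' idl (hsupp α)

namespace Induces

theorem symm (h : Induces φ lam) : Induces φ.symm lam.symm := by
  intro α
  have hα := h (φ.symm α)
  rw [φ.apply_symm_apply] at hα
  rw [hα, lam.symm_image_image]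

theorem idl_hsupp_map_single [DecidableEq Ω] (h : Induces φ lam) {i : Ω} {x : H i}
    (hx : x ≠ 0) : idl (hsupp (φ (Pi.single i x))) = Iic (lam i) := by
  rw [h, hsupp_single hx, idl_singleton, lam.image_Iic]

theorem hsupp_map_single_subset [DecidableEq Ω] (h : Induces φ lam) (i : Ω) (x : H i) :
    hsupp (φ (Pi.single i x)) ⊆ Iic (lam i) := by
  obtain rfl | hx := eq_or_ne x 0
  · simp [hsupp]
  · exact h.idl_hsupp_map_single hx ▸ subset_idl _

theorem apply_eq_of_mem_Kset (h : Induces φ lam) (h' : Induces φ lam') {i : Ω}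
    (hi : i ∈ Kset H) : lam i = lam' i := by
  classical
  obtain ⟨x, hx⟩ := hi
  exact Iic_injective ((h.idl_hsupp_map_single hx).symm.trans (h'.idl_hsupp_map_single hx))

theorem map_apply_congr (h : Induces φ lam) {i j : Ω} (hij : lam i = j)
    {α β : ∀ i, H i} (hαβ : ∀ k, i ≤ k → α k = β k) : φ α j = φ β j := by
  subst hij
  by_contra hne
  have hmem : lam i ∈ idl (hsupp (φ (α - β))) :=
    subset_idl _ (by simpa [hsupp, sub_eq_zero] using hne)
  rw [h, lam.injective.mem_set_image] at hmem
  obtain ⟨k, hk, hik⟩ := hmem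
  exact hk (sub_eq_zero.2 (hαβ k hik))

theorem symm_single_map_single [DecidableEq Ω] (h : Induces φ lam) {i j : Ω} (hij : lam i = j)
    (x : H i) : φ.symm (Pi.single j (φ (Pi.single i x) j)) i = x := by
  have hagree : ∀ k, j ≤ k →
      (Pi.single j (φ (Pi.single i x) j) : ∀ i, H i) k = φ (Pi.single i x) k := by
    intro k hjk
    obtain rfl | hne := eq_or_ne k j
    · exact Pi.single_eq_same _ _
    · rw [Pi.single_eq_of_ne hne]
      by_contra hnz
      have hkj : k ≤ j := hij ▸ h.hsupp_map_single_subset i x (Ne.symm hnz)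
      exact hne (hkj.antisymm hjk)
  simpa using h.symm.map_apply_congr (lam.symm_apply_eq.2 hij.symm) hagree

theorem nonempty_linearEquiv (h : Induces φ lam) (i : Ω) :
    Nonempty (H i ≃ₗ[S] H (lam i)) := by
  classical
  let component (ψ : (∀ i, H i) ≃ₗ[S] (∀ i, H i)) (i j : Ω) : H i →ₗ[S] H j :=
    LinearMap.proj j ∘ₗ ψ.toLinearMap ∘ₗ LinearMap.single S H i
  refine ⟨.ofLinearMap (component φ i (lam i)) (component φ.symm (lam i) i) ?_ ?_⟩
  · ext y
    exact h.symm.symm_single_map_single (lam.symm_apply_apply i) y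
  · ext x
    exact h.symm_single_map_single rfl x

end Induces

end Induces

section Leading

variable {Ω : Type*} [PartialOrder Ω] {S : Type*} [Semiring S] {H : Ω → Type*}
  [∀ i, AddCommGroup (H i)] [∀ i, Module S (H i)]
  {φ : (∀ i, H i) ≃ₗ[S] (∀ i, H i)}

/-- The index `j` is the leading index of `φ` at `u`: both components are nonzero, and `φ`
restricts to a bijection from the vectors supported below `u` onto those supported below `j`. -/
structure LeadsTo (φ : (∀ i, H i) ≃ₗ[S] (∀ i, H i)) (u j : Ω) : Prop where
  source_mem : u ∈ Kset H
  target_mem : j ∈ Kset H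
  hsupp_map_subset_iff : ∀ δ, hsupp (φ δ) ⊆ Iic j ↔ hsupp δ ⊆ Iic u

namespace LeadsTo

variable {u v j k : Ω}

theorem symm (h : LeadsTo φ u j) : LeadsTo φ.symm j u :=
  ⟨h.target_mem, h.source_mem, fun δ ↦ by simp [← h.hsupp_map_subset_iff]⟩

theorem le_of_le (hu : LeadsTo φ u j) (hv : LeadsTo φ v k) (huv : u ≤ v) : j ≤ k := by
  classical
  obtain ⟨x, hx⟩ := hu.target_mem
  have hj : hsupp (Pi.single j x : ∀ i, H i) = {j} := hsupp_single hx
  have hpre : hsupp (φ.symm (Pi.single j x)) ⊆ Iic u := by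
    rw [hu.symm.hsupp_map_subset_iff, hj, singleton_subset_iff, mem_Iic]
  have hpost := (hv.symm.hsupp_map_subset_iff _).1 (hpre.trans (Iic_subset_Iic.2 huv))
  simpa [hj] using hpost

theorem unique (h : LeadsTo φ u j) (h' : LeadsTo φ u k) : j = k :=
  (h.le_of_le h' le_rfl).antisymm (h'.le_of_le h le_rfl)

end LeadsTo

/-- The permutation `e` sends each index of `K` to its leading index and fixes all others. -/
structure IsLeadingPerm (φ : (∀ i, H i) ≃ₗ[S] (∀ i, H i)) (e : Equiv.Perm Ω) : Prop where
  apply_eq_self : ∀ i ∉ Kset H, e i = i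
  leadsTo : ∀ i ∈ Kset H, LeadsTo φ i (e i)

namespace IsLeadingPerm

theorem symm {e : Equiv.Perm Ω} (h : IsLeadingPerm φ e) : IsLeadingPerm φ.symm e.symm := by
  refine ⟨fun i hi ↦ e.symm_apply_eq.2 (h.apply_eq_self i hi).symm, fun i hi ↦ ?_⟩
  have hmem : e.symm i ∈ Kset H := by
    by_contra hn
    have hfix : i = e.symm i := by simpa using h.apply_eq_self _ hn
    exact hn (hfix ▸ hi)
  simpa using (h.leadsTo _ hmem).symm

variable [Finite Ω] {lam : Ω ≃o Ω}

theorem idl_hsupp_map_subset (h : IsLeadingPerm φ lam.toEquiv) (α : ∀ i, H i) :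
    idl (hsupp (φ α)) ⊆ lam '' idl (hsupp α) := by
  classical
  rw [← idl_image]
  refine (isIdl_idl _).idl_subset fun b hb ↦ ?_
  obtain ⟨j, hj, hbj⟩ := exists_mem_hsupp_map_single φ hb
  have hsub : hsupp (φ (Pi.single j (α j))) ⊆ Iic (lam j) :=
    ((h.leadsTo j ⟨α j, hj⟩).hsupp_map_subset_iff _).2
      ((hsupp_single_subset j (α j)).trans (singleton_subset_iff.2 self_mem_Iic))
  exact ⟨lam j, mem_image_of_mem lam hj, hsub hbj⟩

theorem induces (h : IsLeadingPerm φ lam.toEquiv) : Induces φ lam := by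
  intro α
  refine (h.idl_hsupp_map_subset α).antisymm ?_
  have hsymm : IsLeadingPerm φ.symm lam.symm.toEquiv := h.symm
  have hsub := hsymm.idl_hsupp_map_subset (φ α)
  rw [φ.symm_apply_apply] at hsub
  simpa only [lam.image_symm_image] using image_mono (f := lam) hsub

end IsLeadingPerm

end Leading

section Weight

variable {Ω : Type*} [PartialOrder Ω] {Y : Type*} {r : Y → Y → Prop} {ϖ : Set Ω → Y}

/-- Conditions (3.1)–(3.3) on the weight `ϖ`, together with the antisymmetry of the relation `r`
(the paper's `⋞`) in which (3.2) is stated. -/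
structure IsIdealWeight (r : Y → Y → Prop) (ϖ : Set Ω → Y) : Prop where
  antisymm : ∀ a b, r a b → r b a → a = b
  apply_idl : ∀ B, ϖ B = ϖ (idl B)
  rel_of_subset : ∀ I J, IsIdl I → IsIdl J → I ⊆ J → r (ϖ I) (ϖ J)
  eq_idl_singleton : ∀ I, IsIdl I → ∀ u ∈ I, ϖ I = ϖ {u} → I = idl {u}

namespace IsIdealWeight

variable {A B : Set Ω} {a b : Ω}

theorem rel_of_subset_idl (hϖ : IsIdealWeight r ϖ) (hAB : A ⊆ idl B) : r (ϖ A) (ϖ B) := by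
  rw [hϖ.apply_idl A, hϖ.apply_idl B]
  exact hϖ.rel_of_subset _ _ (isIdl_idl A) (isIdl_idl B) ((isIdl_idl B).idl_subset hAB)

theorem rel_singleton (hϖ : IsIdealWeight r ϖ) (ha : a ∈ A) : r (ϖ {a}) (ϖ A) :=
  hϖ.rel_of_subset_idl (singleton_subset_iff.2 (subset_idl A ha))

theorem rel_singleton_of_subset_Iic (hϖ : IsIdealWeight r ϖ) (hA : A ⊆ Iic a) :
    r (ϖ A) (ϖ {a}) :=
  hϖ.rel_of_subset_idl (hA.trans_eq (idl_singleton a).symm)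

theorem idl_eq_Iic (hϖ : IsIdealWeight r ϖ) (ha : a ∈ A) (hA : r (ϖ A) (ϖ {a})) :
    idl A = Iic a := by
  have hweight : ϖ A = ϖ {a} := hϖ.antisymm _ _ hA (hϖ.rel_singleton ha)
  rw [hϖ.apply_idl A] at hweight
  rw [← idl_singleton]
  exact hϖ.eq_idl_singleton _ (isIdl_idl A) a (subset_idl A ha) hweight

theorem eq_of_le (hϖ : IsIdealWeight r ϖ) (hab : a ≤ b) (h : ϖ {a} = ϖ {b}) : a = b := by
  have hideal : idl (Iic b) = Iic a :=
    hϖ.idl_eq_Iic hab (h ▸ hϖ.rel_singleton_of_subset_Iic subset_rfl)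
  exact hab.antisymm (hideal.subset (subset_idl _ self_mem_Iic))

theorem lenP_eq (hϖ : IsIdealWeight r ϖ) (hΩ : Hierarchical Ω) (h : ϖ {a} = ϖ {b}) :
    lenP a = lenP b := by
  rcases lt_trichotomy (lenP a) (lenP b) with hlt | heq | hgt
  · rw [hϖ.eq_of_le (hΩ a b hlt) h]
  · exact heq
  · rw [hϖ.eq_of_le (hΩ b a hgt) h.symm]

end IsIdealWeight

end Weight

section WeightPreserving

variable {Ω : Type*} {S : Type*} [Ring S] {H : Ω → Type*}
  [∀ i, AddCommGroup (H i)] [∀ i, Module S (H i)] {Y : Type*} {r : Y → Y → Prop}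
  {ϖ : Set Ω → Y} {φ : (∀ i, H i) ≃ₗ[S] (∀ i, H i)}

theorem Gpred.symm (hφ : Gpred S H ϖ φ) : Gpred S H ϖ φ.symm := by
  intro α
  simpa using (hφ (φ.symm α)).symm

variable [PartialOrder Ω]

theorem Induces.weight_image {lam : Ω ≃o Ω} (h : Induces φ lam) (hϖ : IsIdealWeight r ϖ)
    (hφ : Gpred S H ϖ φ) {I : Set Ω} (hI : I ⊆ Kset H) : ϖ (lam '' I) = ϖ I := by
  obtain ⟨α, rfl⟩ := exists_hsupp_eq hI
  rw [hϖ.apply_idl, idl_image, ← h, ← hϖ.apply_idl, hφ]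

theorem LeadsTo.rel_weight {u j : Ω} (h : LeadsTo φ u j) (hϖ : IsIdealWeight r ϖ)
    (hφ : Gpred S H ϖ φ) : r (ϖ {u}) (ϖ {j}) := by
  classical
  obtain ⟨x, hx⟩ := h.source_mem
  have hu : hsupp (Pi.single u x : ∀ i, H i) = {u} := hsupp_single hx
  rw [← hu, ← hφ]
  apply hϖ.rel_singleton_of_subset_Iic
  rw [h.hsupp_map_subset_iff, hu, singleton_subset_iff, mem_Iic]

theorem LeadsTo.weight_eq {u j : Ω} (h : LeadsTo φ u j) (hϖ : IsIdealWeight r ϖ)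
    (hφ : Gpred S H ϖ φ) : ϖ {u} = ϖ {j} :=
  hϖ.antisymm _ _ (h.rel_weight hϖ hφ) (h.symm.rel_weight hϖ hφ.symm)

namespace Gpred

theorem hsupp_map_subset_Iic (hφ : Gpred S H ϖ φ) (hϖ : IsIdealWeight r ϖ) {γ δ : ∀ i, H i}
    {u j : Ω} (hγ : idl (hsupp γ) = Iic u) (hφγ : idl (hsupp (φ γ)) = Iic j)
    (hδ : hsupp δ ⊆ Iic u) : hsupp (φ δ) ⊆ Iic j := by
  have hweight : ϖ {u} = ϖ {j} := by
    rw [hϖ.apply_idl {u}, hϖ.apply_idl {j}, idl_singleton, idl_singleton, ← hγ, ← hφγ,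
      ← hϖ.apply_idl, ← hϖ.apply_idl, hφ]
  have hγ_sub : hsupp γ ⊆ Iic u := (subset_idl _).trans hγ.subset
  have hφγ_sub : hsupp (φ γ) ⊆ Iic j := (subset_idl _).trans hφγ.subset
  have hprincipal : ∀ ε : ∀ i, H i, hsupp ε ⊆ Iic u → φ ε j ≠ 0 → hsupp (φ ε) ⊆ Iic j := by
    intro ε hε hεj
    have hrel : r (ϖ (hsupp (φ ε))) (ϖ {j}) := by
      rw [hφ, ← hweight]
      exact hϖ.rel_singleton_of_subset_Iic hε
    exact (subset_idl _).trans (hϖ.idl_eq_Iic hεj hrel).subset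
  by_cases hδj : φ δ j = 0
  · have hne : φ (γ - δ) j ≠ 0 := by
      have hγj : φ γ j ≠ 0 := mem_of_idl_eq_Iic hφγ
      simpa [hδj] using hγj
    have hsub : hsupp (φ (γ - δ)) ⊆ Iic j :=
      hprincipal _ ((hsupp_sub_subset γ δ).trans (union_subset hγ_sub hδ)) hne
    have hsplit : φ δ = φ γ - φ (γ - δ) := by rw [map_sub, sub_sub_cancel]
    rw [hsplit]
    exact (hsupp_sub_subset _ _).trans (union_subset hφγ_sub hsub)
  · exact hprincipal δ hδ hδj

theorem leadsTo (hφ : Gpred S H ϖ φ) (hϖ : IsIdealWeight r ϖ) {γ : ∀ i, H i} {u j : Ω}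
    (hγ : idl (hsupp γ) = Iic u) (hφγ : idl (hsupp (φ γ)) = Iic j) : LeadsTo φ u j where
  source_mem := ⟨γ u, mem_of_idl_eq_Iic hγ⟩
  target_mem := ⟨φ γ j, mem_of_idl_eq_Iic hφγ⟩
  hsupp_map_subset_iff δ := by
    refine ⟨fun hδ ↦ ?_, hφ.hsupp_map_subset_Iic hϖ hγ hφγ⟩
    simpa using hφ.symm.hsupp_map_subset_Iic hϖ hφγ (by simpa using hγ) hδ

variable [Finite Ω]

theorem exists_idl_hsupp_map_eq_Iic (hφ : Gpred S H ϖ φ) (hϖ : IsIdealWeight r ϖ)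
    {γ : ∀ i, H i} {u : Ω} (hγ : idl (hsupp γ) = Iic u) :
    ∃ j, idl (hsupp (φ γ)) = Iic j := by
  classical
  have hu : u ∈ hsupp (φ.symm (φ γ)) := by
    rw [φ.symm_apply_apply]
    exact mem_of_idl_eq_Iic hγ
  obtain ⟨j, hj, huj⟩ := exists_mem_hsupp_map_single φ.symm hu
  have hweight : ϖ (hsupp (φ γ)) = ϖ {u} := by
    rw [hφ, hϖ.apply_idl, hγ, ← idl_singleton, ← hϖ.apply_idl]
  have hrel : r (ϖ {u}) (ϖ {j}) := by
    rw [← hsupp_single (H := H) hj, ← hφ.symm]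
    exact hϖ.rel_singleton huj
  exact ⟨j, hϖ.idl_eq_Iic hj (hweight ▸ hrel)⟩

theorem exists_leadsTo (hφ : Gpred S H ϖ φ) (hϖ : IsIdealWeight r ϖ) {u : Ω}
    (hu : u ∈ Kset H) : ∃ j, LeadsTo φ u j := by
  classical
  obtain ⟨x, hx⟩ := hu
  have hprincipal : idl (hsupp (Pi.single u x : ∀ i, H i)) = Iic u := by
    rw [hsupp_single hx, idl_singleton]
  obtain ⟨j, hj⟩ := hφ.exists_idl_hsupp_map_eq_Iic hϖ hprincipal
  exact ⟨j, hφ.leadsTo hϖ hprincipal hj⟩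

theorem exists_isLeadingPerm (hφ : Gpred S H ϖ φ) (hϖ : IsIdealWeight r ϖ) :
    ∃ e, IsLeadingPerm φ e := by
  classical
  choose f hf using fun u : Kset H ↦ hφ.exists_leadsTo hϖ u.2
  choose g hg using fun u : Kset H ↦ hφ.symm.exists_leadsTo hϖ u.2
  let e : Equiv.Perm (Kset H) :=
    { toFun u := ⟨f u, (hf u).target_mem⟩
      invFun u := ⟨g u, (hg u).target_mem⟩
      left_inv u := Subtype.ext ((hg _).unique (hf u).symm)
      right_inv u := Subtype.ext ((hf _).unique (hg u).symm) }
  refine ⟨e.ofSubtype, fun i hi ↦ e.ofSubtype_apply_of_not_mem hi, fun i hi ↦ ?_⟩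
  rw [e.ofSubtype_apply_of_mem hi]
  exact hf ⟨i, hi⟩

end Gpred

namespace IsLeadingPerm

variable {e : Equiv.Perm Ω}

theorem weight_apply (h : IsLeadingPerm φ e) (hϖ : IsIdealWeight r ϖ) (hφ : Gpred S H ϖ φ)
    (u : Ω) : ϖ {e u} = ϖ {u} := by
  by_cases hu : u ∈ Kset H
  · exact ((h.leadsTo u hu).weight_eq hϖ hφ).symm
  · rw [h.apply_eq_self u hu]

variable [Finite Ω]

theorem monotone (h : IsLeadingPerm φ e) (hϖ : IsIdealWeight r ϖ) (hφ : Gpred S H ϖ φ)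
    (hΩ : (∀ i : Ω, ∃ x : H i, x ≠ 0) ∨ Hierarchical Ω) : Monotone e := by
  rcases hΩ with hK | hΩ
  · exact fun u v huv ↦ (h.leadsTo u (hK u)).le_of_le (h.leadsTo v (hK v)) huv
  · have hlen (u : Ω) : lenP (e u) = lenP u := hϖ.lenP_eq hΩ (h.weight_apply hϖ hφ u)
    refine monotone_iff_forall_lt.2 fun u v huv ↦ hΩ _ _ ?_
    rw [hlen, hlen]
    exact lenP_strictMono huv

end IsLeadingPerm

theorem Gpred.exists_induces [Finite Ω] (hφ : Gpred S H ϖ φ) (hϖ : IsIdealWeight r ϖ)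
    (hΩ : (∀ i : Ω, ∃ x : H i, x ≠ 0) ∨ Hierarchical Ω) :
    ∃ lam : Ω ≃o Ω, (∀ i ∉ Kset H, lam i = i) ∧ Induces φ lam := by
  obtain ⟨e, he⟩ := hφ.exists_isLeadingPerm hϖ
  let lam : Ω ≃o Ω :=
    e.toOrderIso (he.monotone hϖ hφ hΩ) (he.symm.monotone hϖ hφ.symm hΩ)
  exact ⟨lam, he.apply_eq_self, IsLeadingPerm.induces (lam := lam) he⟩

end WeightPreserving

theorem stmt2 {Ω : Type*} [Fintype Ω] [Nonempty Ω] [PartialOrder Ω]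
    {S : Type*} [Ring S] {H : Ω → Type*} [∀ i, AddCommGroup (H i)] [∀ i, Module S (H i)]
    {Y : Type*} (r : Y → Y → Prop) (hr : ∀ a b : Y, r a b → r b a → a = b)
    (ϖ : Set Ω → Y)
    (h31 : ∀ B : Set Ω, ϖ B = ϖ (idl B))
    (h32 : ∀ I J : Set Ω, IsIdl I → IsIdl J → I ⊆ J → r (ϖ I) (ϖ J))
    (h33 : ∀ I : Set Ω, IsIdl I → ∀ u ∈ I, ϖ I = ϖ {u} → I = idl {u})
    (hassum : (∀ i : Ω, ∃ x : H i, x ≠ 0) ∨ Hierarchical Ω)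
    (φ : (∀ i, H i) ≃ₗ[S] (∀ i, H i)) (hφ : Gpred S H ϖ φ) :
    ∃ lam : Ω ≃o Ω,
      ((∀ i ∉ Kset H, lam i = i) ∧
        ∀ α : ∀ i, H i, idl (hsupp (φ α)) = lam '' idl (hsupp α)) ∧
      Tpred S H ϖ lam ∧
      ∀ lam' : Ω ≃o Ω,
        ((∀ i ∉ Kset H, lam' i = i) ∧
          ∀ α : ∀ i, H i, idl (hsupp (φ α)) = lam' '' idl (hsupp α)) → lam' = lam := by
  have hϖ : IsIdealWeight r ϖ := ⟨hr, h31, h32, h33⟩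
  obtain ⟨lam, hfix, hlam⟩ := hφ.exists_induces hϖ hassum
  refine ⟨lam, ⟨hfix, hlam⟩,
    ⟨hfix, fun I hI ↦ hlam.weight_image hϖ hφ hI, hlam.nonempty_linearEquiv⟩, ?_⟩
  rintro lam' ⟨hfix', hlam' : Induces φ lam'⟩
  ext i
  by_cases hi : i ∈ Kset H
  · exact hlam'.apply_eq_of_mem_Kset hlam hi
  · rw [hfix i hi, hfix' i hi]
end

section
/- Assume that P is hierarchical, H satisfies Condition (A), and (H, P) satisfies Condition (B). Then for every r ∈ [1, m], every linear code C ⊆ δ(⋃_{j=1}^{r} W_j), and every S-linear map f : C → H preserving P-support, there exists φ ∈ GL_P(H) such that φ restricted to C equals f and φ(α) = α for all α ∈ δ(⋃_{j=r+1}^{m} W_j). In particular, H satisfies the MacWilliams extension property for P-support. -/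
noncomputable def maxChainCard (Ω : Type*) [PartialOrder Ω] : ℕ :=
  sSup {n : ℕ | ∃ c : Finset Ω, IsChain (· ≤ ·) (c : Set Ω) ∧ c.card = n}

def Wset {Ω : Type*} [PartialOrder Ω] (r : ℕ) : Set Ω := {u | lenP u = r}

def CondA (S : Type*) [Ring S] {Ω : Type*} (H : Ω → Type*)
    [∀ i, AddCommGroup (H i)] [∀ i, Module S (H i)] : Prop :=
  ∀ i : Ω, ∀ B : Submodule S (H i), ∀ h : B →ₗ[S] H i, Function.Injective h →
    ∃ τ : H i ≃ₗ[S] H i, ∀ b : B, τ b = h b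

def CondB (S : Type*) [Ring S] {Ω : Type*} [PartialOrder Ω] (H : Ω → Type*)
    [∀ i, AddCommGroup (H i)] [∀ i, Module S (H i)] : Prop :=
  ∀ k l : Ω, k ≤ l → k ≠ l →
    ∀ A : Submodule S (H l), ∀ f : A →ₗ[S] H k, ∃ g : H l →ₗ[S] H k, ∀ a : A, g a = f a

def MEPsupp (S : Type*) [Ring S] {Ω : Type*} [PartialOrder Ω] (H : Ω → Type*)
    [∀ i, AddCommGroup (H i)] [∀ i, Module S (H i)] : Prop :=
  ∀ C : Submodule S (∀ i, H i), ∀ f : C →ₗ[S] (∀ i, H i),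
    (∀ x : C, idl (hsupp (f x)) = idl (hsupp (x : ∀ i, H i))) →
    ∃ φ : (∀ i, H i) ≃ₗ[S] (∀ i, H i),
      (∀ α : ∀ i, H i, idl (hsupp (φ α)) = idl (hsupp α)) ∧ ∀ x : C, φ (x : ∀ i, H i) = f x

/-!
On the subcode of words `x` vanishing strictly above `k`, preservation of the `P`-support means that
`x k` and `f x k` vanish together, so Condition (A) turns `x k ↦ f x k` into an automorphism `τ k`
of `H k`. The remainder `f x k - τ k (x k)` then depends only on the coordinates of `x` strictly
above `k`, and since `H k` is injective relative to their product (Condition (B)) it extends to a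
linear map on that product. These rows form a triangular endomorphism of `H` with invertible
diagonal; such a map is bijective and preserves `P`-support.

A map on `C ⊆ δ(U)` with `U` a lower set is first extended by the identity on `δ(Uᶜ)`; this again
preserves `P`-support, so the extension property yields a `φ` that fixes `δ(Uᶜ)`.
-/

section RelativeInjectivity

/-- The module `M` is injective relative to `N` (`N`-injective): maps into `M` from submodules of
`N` extend to `N`. Condition (B) asks this of `H k` relative to `H l` whenever `k < l`. -/
def IsRelInjective (S M N : Type*) [Ring S] [AddCommGroup M] [Module S M] [AddCommGroup N]
    [Module S N] : Prop :=
  ∀ A : Submodule S N, ∀ f : A →ₗ[S] M, ∃ g : N →ₗ[S] M, ∀ a : A, g a = f a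

/-- The module `M` is strong pseudo-injective: embeddings into `M` of its submodules extend to
automorphisms of `M`. Condition (A) asks this of every `H i`. -/
def IsStrongPseudoInjective (S M : Type*) [Ring S] [AddCommGroup M] [Module S M] : Prop :=
  ∀ B : Submodule S M, ∀ h : B →ₗ[S] M, Function.Injective h →
    ∃ τ : M ≃ₗ[S] M, ∀ b : B, τ b = h b

variable {S A M N N' : Type*} [Ring S] [AddCommGroup A] [Module S A] [AddCommGroup M] [Module S M]
  [AddCommGroup N] [Module S N] [AddCommGroup N'] [Module S N']

theorem exists_range_apply_eq (p : A →ₗ[S] N) (q : A →ₗ[S] M) (h : ∀ a, p a = 0 → q a = 0) :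
    ∃ g : LinearMap.range p →ₗ[S] M, ∀ a, g (p.rangeRestrict a) = q a := by
  refine ⟨(LinearMap.ker p).liftQ q (fun a ha => h a ha) ∘ₗ p.quotKerEquivRange.symm, fun a => ?_⟩
  have hmk : p.quotKerEquivRange.symm (p.rangeRestrict a) = (LinearMap.ker p).mkQ a :=
    p.quotKerEquivRange_symm_apply_image a (LinearMap.mem_range_self p a)
  rw [LinearMap.comp_apply, LinearEquiv.coe_coe, hmk]
  exact Submodule.liftQ_apply _ _ _

theorem IsRelInjective.exists_apply_eq (hMN : IsRelInjective S M N) (p : A →ₗ[S] N)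
    (q : A →ₗ[S] M) (h : ∀ a, p a = 0 → q a = 0) : ∃ g : N →ₗ[S] M, ∀ a, g (p a) = q a := by
  obtain ⟨g₀, hg₀⟩ := exists_range_apply_eq p q h
  obtain ⟨g, hg⟩ := hMN _ g₀
  exact ⟨g, fun a => (hg (p.rangeRestrict a)).trans (hg₀ a)⟩

theorem IsStrongPseudoInjective.exists_equiv_apply_eq (hM : IsStrongPseudoInjective S M)
    (p q : A →ₗ[S] M) (h : ∀ a, q a = 0 ↔ p a = 0) : ∃ τ : M ≃ₗ[S] M, ∀ a, τ (p a) = q a := by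
  obtain ⟨g, hg⟩ := exists_range_apply_eq p q fun a => (h a).2
  have hinj : Function.Injective g := by
    rw [injective_iff_map_eq_zero]
    intro y hy
    obtain ⟨a, rfl⟩ := p.surjective_rangeRestrict y
    rw [hg, h] at hy
    exact Subtype.ext hy
  obtain ⟨τ, hτ⟩ := hM _ g hinj
  exact ⟨τ, fun a => (hτ (p.rangeRestrict a)).trans (hg a)⟩

theorem IsRelInjective.of_injective (hMN : IsRelInjective S M N) (i : N' →ₗ[S] N)
    (hi : Function.Injective i) : IsRelInjective S M N' := by
  intro A f
  obtain ⟨g, hg⟩ := hMN.exists_apply_eq (i ∘ₗ A.subtype) f fun a ha => by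
    have ha' : a = 0 := Subtype.ext (hi (by simpa using ha))
    rw [ha', map_zero]
  exact ⟨g ∘ₗ i, hg⟩

theorem IsRelInjective.of_subsingleton [Subsingleton N] : IsRelInjective S M N := fun _ _ =>
  ⟨0, fun a => by rw [Subsingleton.elim a 0]; simp⟩

theorem IsRelInjective.prod (hN : IsRelInjective S M N) (hN' : IsRelInjective S M N') :
    IsRelInjective S M (N × N') := by
  intro A f
  let p : A →ₗ[S] N := LinearMap.fst S N N' ∘ₗ A.subtype
  let p' : A →ₗ[S] N' := LinearMap.snd S N N' ∘ₗ A.subtype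
  obtain ⟨g', hg'⟩ := hN'.exists_apply_eq (A := LinearMap.ker p)
    (p'.domRestrict _) (f.domRestrict _) fun a ha => by
      have ha' : a.1 = 0 := Subtype.ext (Prod.ext a.2 ha)
      exact (congrArg f ha').trans (map_zero f)
  obtain ⟨g, hg⟩ := hN.exists_apply_eq p (f - g' ∘ₗ p') fun a ha =>
    sub_eq_zero.2 (hg' ⟨a, ha⟩).symm
  refine ⟨g.coprod g', fun a => ?_⟩
  calc g (p a) + g' (p' a) = (f a - g' (p' a)) + g' (p' a) := by rw [hg a]; rfl
    _ = f a := sub_add_cancel _ _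

theorem IsRelInjective.pi {ι : Type*} [Finite ι] {N : ι → Type*} [∀ i, AddCommGroup (N i)]
    [∀ i, Module S (N i)] (h : ∀ i, IsRelInjective S M (N i)) : IsRelInjective S M (∀ i, N i) :=
  Module.pi_induction' S (motive := fun N _ _ => IsRelInjective S M N)
    (motive' := fun N _ _ => IsRelInjective S M N)
    (fun e hN => hN.of_injective e.symm.toLinearMap e.symm.injective)
    (fun e hN => hN.of_injective e.symm.toLinearMap e.symm.injective)
    .of_subsingleton (fun hN hN' => hN.prod hN') N h

theorem IsStrongPseudoInjective.exists_equiv_add_eq (hM : IsStrongPseudoInjective S M)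
    (hMN : IsRelInjective S M N) (p q : A →ₗ[S] M) (u : A →ₗ[S] N)
    (h : ∀ a, u a = 0 → (q a = 0 ↔ p a = 0)) :
    ∃ (τ : M ≃ₗ[S] M) (g : N →ₗ[S] M), ∀ a, τ (p a) + g (u a) = q a := by
  obtain ⟨τ, hτ⟩ := hM.exists_equiv_apply_eq (p.domRestrict (LinearMap.ker u))
    (q.domRestrict (LinearMap.ker u)) fun a => h a a.2
  obtain ⟨g, hg⟩ := hMN.exists_apply_eq u (q - τ.toLinearMap ∘ₗ p) fun a ha =>
    sub_eq_zero.2 (hτ ⟨a, ha⟩).symm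
  refine ⟨τ, g, fun a => ?_⟩
  calc τ (p a) + g (u a) = τ (p a) + (q a - τ (p a)) := by rw [hg a]; rfl
    _ = q a := add_sub_cancel _ _

end RelativeInjectivity

section Support

variable {Ω S : Type*} {H : Ω → Type*}

theorem hsupp_add_of_disjoint [∀ i, AddZeroClass (H i)] {α β : ∀ i, H i}
    (h : Disjoint (hsupp α) (hsupp β)) : hsupp (α + β) = hsupp α ∪ hsupp β := by
  ext i
  by_cases hi : α i = 0
  · simp [hsupp, hi]
  · have hβ : β i = 0 := not_not.1 (Set.disjoint_left.1 h hi)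
    simp [hsupp, hβ]

variable [Ring S] [∀ i, AddCommGroup (H i)] [∀ i, Module S (H i)]

variable (S H) in
/-- The code `δ(I)` of the words supported in `I`. -/
def supportedIn (I : Set Ω) : Submodule S (∀ i, H i) :=
  Submodule.pi Iᶜ fun _ => ⊥

theorem mem_supportedIn {I : Set Ω} {β : ∀ i, H i} : β ∈ supportedIn S H I ↔ hsupp β ⊆ I := by
  simp only [supportedIn, Submodule.mem_pi, Submodule.mem_bot, Set.mem_compl_iff]
  exact forall_congr' fun i => not_imp_comm

theorem disjoint_supportedIn {I J : Set Ω} (hIJ : Disjoint I J) :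
    Disjoint (supportedIn S H I) (supportedIn S H J) := by
  rw [Submodule.disjoint_def]
  intro α hI hJ
  ext i
  by_contra hi
  exact Set.disjoint_left.1 hIJ (mem_supportedIn.1 hI hi) (mem_supportedIn.1 hJ hi)

end Support

section Ideals

variable {Ω : Type*} [PartialOrder Ω] {H : Ω → Type*}

theorem idl_eq_lowerClosure (B : Set Ω) : idl B = lowerClosure B := rfl

theorem idl_union (B B' : Set Ω) : idl (B ∪ B') = idl B ∪ idl B' := by
  simp only [idl_eq_lowerClosure, lowerClosure_union, LowerSet.coe_sup]

theorem notMem_idl_hsupp [∀ i, Zero (H i)] {α : ∀ i, H i} {k : Ω} :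
    k ∉ idl (hsupp α) ↔ ∀ l, k ≤ l → α l = 0 := by
  simp only [idl, hsupp, Set.mem_ofPred_eq, not_exists, not_and', not_not]

theorem idl_hsupp_eq_iff [∀ i, Zero (H i)] {α β : ∀ i, H i} :
    idl (hsupp β) = idl (hsupp α) ↔
      ∀ k, (∀ l, k ≤ l → β l = 0) ↔ ∀ l, k ≤ l → α l = 0 := by
  simp only [← notMem_idl_hsupp, not_iff_not, Set.ext_iff]

theorem apply_eq_zero_iff_of_idl_hsupp_eq [∀ i, Zero (H i)] {α β : ∀ i, H i}
    (h : idl (hsupp β) = idl (hsupp α)) {k : Ω} (hα : ∀ l, k < l → α l = 0) :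
    β k = 0 ↔ α k = 0 := by
  rw [idl_hsupp_eq_iff] at h
  have hβ : ∀ l, k < l → β l = 0 := fun l hl =>
    (h l).2 (fun j hj => hα j (hl.trans_le hj)) l le_rfl
  have vanish_Ici {γ : ∀ i, H i} (hγ : ∀ l, k < l → γ l = 0) :
      γ k = 0 ↔ ∀ l, k ≤ l → γ l = 0 :=
    ⟨fun hk l hl => hl.eq_or_lt.elim (fun e => e ▸ hk) (hγ l), fun hk => hk k le_rfl⟩
  rw [vanish_Ici hβ, vanish_Ici hα, h k]

end Ideals

section Triangular

variable {Ω S : Type*} [Preorder Ω] [Ring S] {H : Ω → Type*} [∀ i, AddCommGroup (H i)]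
  [∀ i, Module S (H i)]

variable (S) in
/-- The projection of `H` onto the coordinates strictly above `k`. -/
def restrictIoi (k : Ω) : (∀ i, H i) →ₗ[S] ∀ l : Set.Ioi k, H l :=
  LinearMap.pi fun l => LinearMap.proj l.1

theorem restrictIoi_eq_zero_iff {k : Ω} {α : ∀ i, H i} :
    restrictIoi S k α = 0 ↔ ∀ l, k < l → α l = 0 := by
  simp [restrictIoi, funext_iff]

/-- The triangular endomorphism of `H` with diagonal entries `τ k`, where `g k` collects the
entries of row `k` strictly above the diagonal. -/
def triangularMap (τ : ∀ k, H k ≃ₗ[S] H k) (g : ∀ k : Ω, (∀ l : Set.Ioi k, H l) →ₗ[S] H k) :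
    (∀ i, H i) →ₗ[S] ∀ i, H i :=
  LinearMap.pi fun k => (τ k).toLinearMap ∘ₗ LinearMap.proj k + g k ∘ₗ restrictIoi S k

variable (τ : ∀ k, H k ≃ₗ[S] H k) (g : ∀ k : Ω, (∀ l : Set.Ioi k, H l) →ₗ[S] H k)

theorem triangularMap_apply (α : ∀ i, H i) (k : Ω) :
    triangularMap τ g α k = τ k (α k) + g k (restrictIoi S k α) := rfl

theorem triangularMap_apply_eq_zero_iff {α : ∀ i, H i} {k : Ω} (hα : ∀ l, k < l → α l = 0) :
    triangularMap τ g α k = 0 ↔ α k = 0 := by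
  rw [triangularMap_apply, restrictIoi_eq_zero_iff.2 hα, map_zero, add_zero,
    LinearEquiv.map_eq_zero_iff]

theorem triangularMap_eq_zero_on_Ici_iff [WellFoundedGT Ω] (α : ∀ i, H i) (k : Ω) :
    (∀ l, k ≤ l → triangularMap τ g α l = 0) ↔ ∀ l, k ≤ l → α l = 0 := by
  constructor
  · intro h l
    induction l using WellFoundedGT.induction with
    | ind l ih =>
      intro hkl
      exact (triangularMap_apply_eq_zero_iff τ g fun j hlj =>
        ih j hlj (hkl.trans hlj.le)).1 (h l hkl)
  · intro h l hkl
    exact (triangularMap_apply_eq_zero_iff τ g fun j hlj =>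
      h j (hkl.trans hlj.le)).2 (h l hkl)

theorem triangularMap_injective [WellFoundedGT Ω] : Function.Injective (triangularMap τ g) := by
  rw [injective_iff_map_eq_zero]
  intro α hα
  ext k
  exact (triangularMap_eq_zero_on_Ici_iff τ g α k).1 (fun l _ => congrFun hα l) k le_rfl

theorem triangularMap_surjective [WellFoundedGT Ω] : Function.Surjective (triangularMap τ g) := by
  intro β
  -- back substitution from the top of `Ω`
  let step (k : Ω) (above : ∀ l, k < l → H l) : H k :=
    (τ k).symm (β k - g k fun l => above l l.2)
  let α : ∀ k, H k := WellFoundedGT.fix step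
  have hα (k : Ω) : α k = (τ k).symm (β k - g k (restrictIoi S k α)) :=
    WellFoundedGT.fix_eq step k
  refine ⟨α, funext fun k => ?_⟩
  rw [triangularMap_apply, hα k, LinearEquiv.apply_symm_apply, sub_add_cancel]

end Triangular

theorem wellFoundedGT_of_finite_Ioi {Ω : Type*} [Preorder Ω] [∀ k : Ω, Finite (Set.Ioi k)] :
    WellFoundedGT Ω :=
  StrictAnti.wellFoundedGT (f := fun k : Ω => (Set.Ioi k).ncard) fun _ _ hkl =>
    Set.ncard_lt_ncard (Set.Ioi_ssubset_Ioi hkl)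

section Extension

variable {Ω : Type*} [PartialOrder Ω] {S : Type*} [Ring S] {H : Ω → Type*}
  [∀ i, AddCommGroup (H i)] [∀ i, Module S (H i)]

theorem idl_hsupp_triangularMap [WellFoundedGT Ω] (τ : ∀ k, H k ≃ₗ[S] H k)
    (g : ∀ k : Ω, (∀ l : Set.Ioi k, H l) →ₗ[S] H k) (α : ∀ i, H i) :
    idl (hsupp (triangularMap τ g α)) = idl (hsupp α) :=
  idl_hsupp_eq_iff.2 (triangularMap_eq_zero_on_Ici_iff τ g α)

theorem exists_triangularMap_eq [∀ k : Ω, Finite (Set.Ioi k)] (hA : CondA S H) (hB : CondB S H)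
    (C : Submodule S (∀ i, H i)) (f : C →ₗ[S] ∀ i, H i)
    (hf : ∀ x : C, idl (hsupp (f x)) = idl (hsupp (x : ∀ i, H i))) :
    ∃ (τ : ∀ k, H k ≃ₗ[S] H k) (g : ∀ k : Ω, (∀ l : Set.Ioi k, H l) →ₗ[S] H k),
      ∀ x : C, triangularMap τ g x = f x := by
  have hrow (k : Ω) : ∃ (τ : H k ≃ₗ[S] H k) (g : (∀ l : Set.Ioi k, H l) →ₗ[S] H k),
      ∀ x : C, τ (x.1 k) + g (restrictIoi S k x.1) = f x k :=
    have hA_k : IsStrongPseudoInjective S (H k) := hA k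
    have hB_k : IsRelInjective S (H k) (∀ l : Set.Ioi k, H l) :=
      .pi fun l => hB k l (Set.mem_Ioi.1 l.2).le (Set.mem_Ioi.1 l.2).ne
    hA_k.exists_equiv_add_eq hB_k (LinearMap.proj k ∘ₗ C.subtype) (LinearMap.proj k ∘ₗ f)
      (restrictIoi S k ∘ₗ C.subtype) fun x hx =>
        apply_eq_zero_iff_of_idl_hsupp_eq (hf x) ((restrictIoi_eq_zero_iff (S := S)).1 hx)
  choose τ g hτg using hrow
  exact ⟨τ, g, fun x => funext fun k => hτg k x⟩

theorem mepsupp_of_condA_of_condB [∀ k : Ω, Finite (Set.Ioi k)] (hA : CondA S H)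
    (hB : CondB S H) : MEPsupp S H := by
  intro C f hf
  have : WellFoundedGT Ω := wellFoundedGT_of_finite_Ioi
  obtain ⟨τ, g, hfφ⟩ := exists_triangularMap_eq hA hB C f hf
  exact ⟨.ofBijective (triangularMap τ g)
    ⟨triangularMap_injective τ g, triangularMap_surjective τ g⟩, idl_hsupp_triangularMap τ g, hfφ⟩

theorem MEPsupp.exists_extension_fixing_compl (hMEP : MEPsupp S H) {U : Set Ω} (hU : IsLowerSet U)
    (C : Submodule S (∀ i, H i)) (hC : ∀ x ∈ C, hsupp x ⊆ U) (f : C →ₗ[S] ∀ i, H i)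
    (hf : ∀ x : C, idl (hsupp (f x)) = idl (hsupp (x : ∀ i, H i))) :
    ∃ φ : (∀ i, H i) ≃ₗ[S] ∀ i, H i,
      (∀ α : ∀ i, H i, idl (hsupp (φ α)) = idl (hsupp α)) ∧
      (∀ x : C, φ (x : ∀ i, H i) = f x) ∧
      ∀ α : ∀ i, H i, hsupp α ⊆ Uᶜ → φ α = α := by
  let D : Submodule S (∀ i, H i) := supportedIn S H Uᶜ
  have hCD : Disjoint C D := (disjoint_supportedIn disjoint_compl_right).mono_left
    fun x hx => mem_supportedIn.2 (hC x hx)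
  have hfU (x : C) : hsupp (f x) ⊆ U := calc
    hsupp (f x) ⊆ idl (hsupp (f x)) := subset_lowerClosure
    _ = idl (hsupp x.1) := hf x
    _ ⊆ U := lowerClosure_min (hC x x.2) hU
  let F : (∀ i, H i) →ₗ.[S] (∀ i, H i) := ⟨C, f⟩
  let G : (∀ i, H i) →ₗ.[S] (∀ i, H i) := ⟨D, D.subtype⟩
  let FG := F.sup G (F.sup_h_of_disjoint G hCD)
  have hFG (z : FG.domain) : idl (hsupp (FG z)) = idl (hsupp z.1) := by
    obtain ⟨x, hx, y, hy, hxy⟩ := Submodule.mem_sup.1 z.2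
    have hadd {w : ∀ i, H i} (hw : hsupp w ⊆ U) :
        idl (hsupp (w + y)) = idl (hsupp w) ∪ idl (hsupp y) := by
      rw [hsupp_add_of_disjoint (disjoint_compl_right.mono hw (mem_supportedIn.1 hy)), idl_union]
    have hz : FG z = f ⟨x, hx⟩ + y := LinearPMap.sup_apply _ ⟨x, hx⟩ ⟨y, hy⟩ z hxy
    rw [hz, ← hxy, hadd (hfU _), hadd (hC x hx), hf]
  obtain ⟨φ, hφsupp, hφ⟩ := hMEP FG.domain FG.toFun hFG
  refine ⟨φ, hφsupp, fun x => ?_, fun α hα => ?_⟩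
  · exact (hφ ⟨x, Submodule.mem_sup_left x.2⟩).trans ((F.left_le_sup G _).2 rfl).symm
  · have hαD : α ∈ D := mem_supportedIn.2 hα
    exact (hφ ⟨α, Submodule.mem_sup_right hαD⟩).trans
      ((F.right_le_sup G _).2 (x := ⟨α, hαD⟩) rfl).symm

theorem stmt6_general [∀ k : Ω, Finite (Set.Ioi k)] (hA : CondA S H) (hB : CondB S H) :
    (∀ U : Set Ω, IsLowerSet U →
      ∀ C : Submodule S (∀ i, H i), (∀ x ∈ C, hsupp x ⊆ U) →
        ∀ f : C →ₗ[S] (∀ i, H i),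
          (∀ x : C, idl (hsupp (f x)) = idl (hsupp (x : ∀ i, H i))) →
          ∃ φ : (∀ i, H i) ≃ₗ[S] (∀ i, H i),
            (∀ α : ∀ i, H i, idl (hsupp (φ α)) = idl (hsupp α)) ∧
            (∀ x : C, φ (x : ∀ i, H i) = f x) ∧
            (∀ α : ∀ i, H i, hsupp α ⊆ Uᶜ → φ α = α)) ∧
    MEPsupp S H :=
  have hMEP := mepsupp_of_condA_of_condB hA hB
  ⟨fun _ hU => hMEP.exists_extension_fixing_compl hU, hMEP⟩

end Extension

theorem bddAbove_of_forall_exists_card_eq {Ω : Type*} [Finite Ω] {s : Set ℕ}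
    (hs : ∀ n ∈ s, ∃ c : Finset Ω, c.card = n) : BddAbove s := by
  have := Fintype.ofFinite Ω
  refine ⟨Fintype.card Ω, fun n hn => ?_⟩
  obtain ⟨c, rfl⟩ := hs n hn
  exact c.card_le_univ

section Levels

variable {Ω : Type*} [PartialOrder Ω]

theorem mem_iUnion_Wset {a b : ℕ} {u : Ω} :
    u ∈ ⋃ j ∈ Finset.Icc a b, Wset (Ω := Ω) j ↔ a ≤ lenP u ∧ lenP u ≤ b := by
  simp [Wset]

variable [Finite Ω]

theorem isGreatest_lenP (y : Ω) :
    IsGreatest {n : ℕ | ∃ c : Finset Ω, IsChain (· ≤ ·) (c : Set Ω) ∧ y ∈ c ∧ (∀ x ∈ c, x ≤ y) ∧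
      c.card = n} (lenP y) := by
  have hbdd : BddAbove {n : ℕ | ∃ c : Finset Ω, IsChain (· ≤ ·) (c : Set Ω) ∧ y ∈ c ∧
      (∀ x ∈ c, x ≤ y) ∧ c.card = n} :=
    bddAbove_of_forall_exists_card_eq fun _ ⟨c, _, _, _, hcard⟩ => ⟨c, hcard⟩
  exact ⟨Nat.sSup_mem ⟨1, {y}, by simp⟩ hbdd, fun _ hn => le_csSup hbdd hn⟩

theorem one_le_lenP (y : Ω) : 1 ≤ lenP y :=
  (isGreatest_lenP y).2 ⟨{y}, by simp⟩

theorem lenP_le_maxChainCard (y : Ω) : lenP y ≤ maxChainCard Ω := by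
  obtain ⟨c, hc, -, -, hcard⟩ := (isGreatest_lenP y).1
  have hbdd : BddAbove {n : ℕ | ∃ c : Finset Ω, IsChain (· ≤ ·) (c : Set Ω) ∧ c.card = n} :=
    bddAbove_of_forall_exists_card_eq fun _ ⟨c, _, hcard⟩ => ⟨c, hcard⟩
  exact le_csSup hbdd ⟨c, hc, hcard⟩

theorem lenP_mono : Monotone (lenP : Ω → ℕ) := by
  classical
  intro x y hxy
  obtain ⟨c, hc, -, hle, hcard⟩ := (isGreatest_lenP x).1
  have hle_y : ∀ z ∈ c, z ≤ y := fun z hz => (hle z hz).trans hxy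
  have hchain : IsChain (· ≤ ·) ((insert y c : Finset Ω) : Set Ω) := by
    rw [Finset.coe_insert]
    exact hc.insert fun z hz _ => Or.inr (hle_y z hz)
  calc lenP x = c.card := hcard.symm
    _ ≤ (insert y c).card := Finset.card_le_card (Finset.subset_insert y c)
    _ ≤ lenP y := (isGreatest_lenP y).2
      ⟨insert y c, hchain, Finset.mem_insert_self y c, by simpa using hle_y, rfl⟩

theorem isLowerSet_iUnion_Wset (r : ℕ) :
    IsLowerSet (⋃ j ∈ Finset.Icc 1 r, Wset (Ω := Ω) j) := fun _ v hvu hu =>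
  mem_iUnion_Wset.2 ⟨one_le_lenP v, (lenP_mono hvu).trans (mem_iUnion_Wset.1 hu).2⟩

theorem compl_iUnion_Wset (r : ℕ) :
    (⋃ j ∈ Finset.Icc 1 r, Wset (Ω := Ω) j)ᶜ =
      ⋃ j ∈ Finset.Icc (r + 1) (maxChainCard Ω), Wset j := by
  ext u
  simp only [Set.mem_compl_iff, mem_iUnion_Wset, one_le_lenP u, lenP_le_maxChainCard u, true_and,
    and_true, not_le, Nat.succ_le_iff]

end Levels

theorem stmt6 {Ω : Type*} [Fintype Ω] [Nonempty Ω] [PartialOrder Ω]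
    {S : Type*} [Ring S] {H : Ω → Type*} [∀ i, AddCommGroup (H i)] [∀ i, Module S (H i)]
    (hhier : Hierarchical Ω) (hA : CondA S H) (hB : CondB S H) :
    (∀ r ∈ Finset.Icc 1 (maxChainCard Ω),
      ∀ C : Submodule S (∀ i, H i),
        (∀ x ∈ C, hsupp x ⊆ ⋃ j ∈ Finset.Icc 1 r, Wset (Ω := Ω) j) →
        ∀ f : C →ₗ[S] (∀ i, H i),
          (∀ x : C, idl (hsupp (f x)) = idl (hsupp (x : ∀ i, H i))) →
          ∃ φ : (∀ i, H i) ≃ₗ[S] (∀ i, H i),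
            (∀ α : ∀ i, H i, idl (hsupp (φ α)) = idl (hsupp α)) ∧
            (∀ x : C, φ (x : ∀ i, H i) = f x) ∧
            (∀ α : ∀ i, H i,
              hsupp α ⊆ ⋃ j ∈ Finset.Icc (r + 1) (maxChainCard Ω), Wset (Ω := Ω) j →
                φ α = α)) ∧
    MEPsupp S H := by
  obtain ⟨hext, hMEP⟩ := stmt6_general hA hB
  exact ⟨fun r _ => by simpa only [compl_iUnion_Wset] using hext _ (isLowerSet_iUnion_Wset r), hMEP⟩
end
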